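/- Let β ∈ (0,2], let φ(λ) = log(1 + λ^{β/2}), and let u : (0,∞) → (0,∞) be a decreasing function with ∫_0^∞ e^{−λt} u(t) dt = 1/φ(λ) for all λ > 0. For an integer d ≥ 3, define g(r) = ∫_0^∞ (4πt)^{−d/2} e^{−r²/(4t)} u(t) dt. Then g(r) ≍ r^{−d} (log(1/r))^{−2} as r → 0+. -/

import Mathlib

open MeasureTheory Set Filter Topology

/-!
The dyadic increment `1/φ(l) - 1/φ(2l)` is of order `(log l)⁻²`, and it equals
`∫ (e^{-ls} - e^{-2ls}) u(s) ds`, a kernel concentrated at `s ≍ 1/l`. Since `u` is decreasing, this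
determines `u` up to constants: `t u(t) ≍ (log t)⁻²` as `t → 0+`.

The Green function averages `u` against the heat kernel at distance `r`, which lives at `t ≍ r²`.
The mass near `r²` gives the lower bound. For the upper bound split at `t = r`: below, compare with
`∫ p_t(r) t⁻¹ dt = const · r^{-d}`; above, `u(t) ≲ t⁻¹ + t^{β/2-1}` and `p_t(r) ≤ t^{-d/2}` leave
only `O(r^{-d/2})`.
-/

open Asymptotics Real

lemma setIntegral_Ioi_eq_Ioc_add_Ioi {E : Type*} [NormedAddCommGroup E] [NormedSpace ℝ E]
    {μ : Measure ℝ} {f : ℝ → E} {a b : ℝ} (hab : a ≤ b) (hf : IntegrableOn f (Ioi a) μ) :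
    ∫ s in Ioi a, f s ∂μ = (∫ s in Ioc a b, f s ∂μ) + ∫ s in Ioi b, f s ∂μ := by
  rw [← Ioc_union_Ioi_eq_Ioi hab] at hf ⊢
  exact setIntegral_union Ioc_disjoint_Ioi_same measurableSet_Ioi hf.left_of_union
    hf.right_of_union

lemma mul_sub_mul_le_setIntegral_of_antitoneOn {k u : ℝ → ℝ} {m a t : ℝ}
    (hu₀ : ∀ s ∈ Ioi 0, 0 ≤ u s) (hu : AntitoneOn u (Ioi 0)) (hk₀ : ∀ s ∈ Ioi 0, 0 ≤ k s)
    (hint : IntegrableOn (fun s ↦ k s * u s) (Ioi 0)) (ha : 0 ≤ a) (hat : a ≤ t)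
    (hm : ∀ s ∈ Ioc a t, m ≤ k s) :
    m * (t - a) * u t ≤ ∫ s in Ioi 0, k s * u s := by
  have hsub : Ioc a t ⊆ Ioi 0 := fun s hs ↦ ha.trans_lt hs.1
  have hle : ∀ s ∈ Ioc a t, m * u t ≤ k s * u s := fun s hs ↦
    have ht : t ∈ Ioi (0 : ℝ) := (hsub hs).trans_le hs.2
    mul_le_mul (hm s hs) (hu (hsub hs) ht hs.2) (hu₀ t ht) (hk₀ s (hsub hs))
  calc m * (t - a) * u t = ∫ _ in Ioc a t, m * u t := by
        rw [setIntegral_const, Real.volume_real_Ioc_of_le hat, smul_eq_mul]; ring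
    _ ≤ ∫ s in Ioc a t, k s * u s :=
        setIntegral_mono_on (integrableOn_const (by simp)) (hint.mono_set hsub)
          measurableSet_Ioc hle
    _ ≤ ∫ s in Ioi 0, k s * u s :=
        setIntegral_mono_set hint
          (ae_restrict_of_forall_mem measurableSet_Ioi fun s hs ↦ mul_nonneg (hk₀ s hs) (hu₀ s hs))
          hsub.eventuallyLE

/-- The kernel `s ↦ e^{-ls} - e^{-2ls}`, which tests a measure for the dyadic increment of its
Laplace transform between `l` and `2l`. -/
noncomputable def dyadicKernel (l s : ℝ) : ℝ := exp (-(l * s)) - exp (-(2 * l * s))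

section DyadicKernel

variable {l s : ℝ}

lemma dyadicKernel_eq (l s : ℝ) : dyadicKernel l s = exp (-(2 * l * s)) * (exp (l * s) - 1) := by
  rw [dyadicKernel, mul_sub, mul_one, ← exp_add]
  ring_nf

lemma mul_exp_le_dyadicKernel (l s : ℝ) : l * s * exp (-(2 * l * s)) ≤ dyadicKernel l s := by
  rw [dyadicKernel_eq, mul_comm]
  gcongr
  linarith [add_one_le_exp (l * s)]

lemma dyadicKernel_nonneg (h : 0 ≤ l * s) : 0 ≤ dyadicKernel l s :=
  (mul_nonneg h (exp_nonneg _)).trans (mul_exp_le_dyadicKernel l s)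

lemma dyadicKernel_le (h : 0 ≤ l * s) : dyadicKernel l s ≤ l * s := by
  have hexp : exp (-(2 * l * s)) = exp (-(l * s)) ^ 2 := by rw [← exp_nat_mul]; ring_nf
  have h₁ : exp (-(l * s)) ≤ 1 := exp_le_one_iff.2 (neg_nonpos.2 h)
  rw [dyadicKernel, hexp]
  nlinarith [add_one_le_exp (-(l * s)), exp_pos (-(l * s))]

lemma integrableOn_dyadicKernel (hl : 0 < l) : IntegrableOn (dyadicKernel l) (Ioi 0) := by
  have h₁ := exp_neg_integrableOn_Ioi 0 hl
  have h₂ := exp_neg_integrableOn_Ioi 0 (mul_pos two_pos hl)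
  simp only [neg_mul] at h₁ h₂
  exact h₁.sub h₂

lemma integral_dyadicKernel (hl : 0 < l) : ∫ s in Ioi 0, dyadicKernel l s = 1 / (2 * l) := by
  have hint : ∀ b : ℝ, 0 < b → ∫ s in Ioi 0, exp (-(b * s)) = 1 / b := fun b hb ↦ by
    simpa [neg_mul] using integral_exp_mul_Ioi (neg_neg_of_pos hb) 0
  have h₁ := exp_neg_integrableOn_Ioi 0 hl
  have h₂ := exp_neg_integrableOn_Ioi 0 (mul_pos two_pos hl)
  simp only [neg_mul] at h₁ h₂
  simp only [dyadicKernel]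
  rw [integral_sub h₁ h₂, hint l hl, hint (2 * l) (by positivity)]
  field_simp
  norm_num

end DyadicKernel

/-- `u` is a decreasing potential density of the subordinator with Laplace exponent `φ`. As a
function on all of `ℝ`, `u` is constrained on `(0, ∞)` only. -/
structure IsDecreasingPotentialDensity (φ u : ℝ → ℝ) : Prop where
  nonneg : ∀ t ∈ Ioi 0, 0 ≤ u t
  antitoneOn : AntitoneOn u (Ioi 0)
  laplace_eq : ∀ l ∈ Ioi 0, ∫ t in Ioi 0, exp (-(l * t)) * u t = 1 / φ l

namespace IsDecreasingPotentialDensity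

variable {φ u : ℝ → ℝ} {l t : ℝ}

lemma integrableOn_exp_mul (hu : IsDecreasingPotentialDensity φ u) (hl : 0 < l) (hφ : φ l ≠ 0) :
    IntegrableOn (fun t ↦ exp (-(l * t)) * u t) (Ioi 0) :=
  .of_integral_ne_zero <| by
    rw [hu.laplace_eq l hl]
    exact one_div_ne_zero hφ

lemma le_exp_one_div (hu : IsDecreasingPotentialDensity φ u) (ht : 0 < t) (hφ : φ t⁻¹ ≠ 0) :
    u t ≤ exp 1 * (t⁻¹ / φ t⁻¹) := by
  have hkernel : ∀ s ∈ Ioc 0 t, exp (-1) ≤ exp (-(t⁻¹ * s)) := fun s hs ↦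
    exp_le_exp.2 (neg_le_neg (by rw [inv_mul_le_one₀ ht]; exact hs.2))
  have h := mul_sub_mul_le_setIntegral_of_antitoneOn hu.nonneg hu.antitoneOn
    (fun _ _ ↦ exp_nonneg _) (hu.integrableOn_exp_mul (inv_pos.2 ht) hφ) le_rfl ht.le hkernel
  rw [hu.laplace_eq _ (inv_pos.2 ht), exp_neg] at h
  calc u t = exp 1 * (t⁻¹ * ((exp 1)⁻¹ * (t - 0) * u t)) := by field_simp; ring
    _ ≤ exp 1 * (t⁻¹ * (1 / φ t⁻¹)) := by gcongr
    _ = exp 1 * (t⁻¹ / φ t⁻¹) := by rw [mul_one_div]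

section Increment

variable (hu : IsDecreasingPotentialDensity φ u) (hl : 0 < l) (hφ₁ : φ l ≠ 0) (hφ₂ : φ (2 * l) ≠ 0)

include hu hl hφ₁ hφ₂

lemma integrableOn_dyadicKernel_mul : IntegrableOn (fun s ↦ dyadicKernel l s * u s) (Ioi 0) := by
  simp only [dyadicKernel, sub_mul]
  exact (hu.integrableOn_exp_mul hl hφ₁).sub (hu.integrableOn_exp_mul (by positivity) hφ₂)

lemma integral_dyadicKernel_mul :
    ∫ s in Ioi 0, dyadicKernel l s * u s = 1 / φ l - 1 / φ (2 * l) := by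
  have hl₂ : 0 < 2 * l := by positivity
  simp only [dyadicKernel, sub_mul]
  rw [integral_sub (hu.integrableOn_exp_mul hl hφ₁) (hu.integrableOn_exp_mul hl₂ hφ₂),
    hu.laplace_eq l hl, hu.laplace_eq _ hl₂]

lemma inv_mul_le_increment : l⁻¹ * u l⁻¹ ≤ 4 * exp 2 * (1 / φ l - 1 / φ (2 * l)) := by
  have hl' : 0 < l⁻¹ := inv_pos.2 hl
  have hkernel : ∀ s ∈ Ioc (l⁻¹ / 2) l⁻¹, 1 / 2 * exp (-2) ≤ dyadicKernel l s := by
    rintro s ⟨hs₁, hs₂⟩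
    have h₁ : 1 / 2 ≤ l * s := by
      calc 1 / 2 = l * (l⁻¹ / 2) := by field_simp
        _ ≤ l * s := by gcongr
    have h₂ : l * s ≤ 1 := by
      calc l * s ≤ l * l⁻¹ := by gcongr
        _ = 1 := mul_inv_cancel₀ hl.ne'
    calc 1 / 2 * exp (-2) ≤ l * s * exp (-(2 * l * s)) := by gcongr; linarith
      _ ≤ dyadicKernel l s := mul_exp_le_dyadicKernel l s
  have h := mul_sub_mul_le_setIntegral_of_antitoneOn hu.nonneg hu.antitoneOn
    (fun s hs ↦ dyadicKernel_nonneg (mul_pos hl hs).le)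
    (hu.integrableOn_dyadicKernel_mul hl hφ₁ hφ₂) (by positivity) (half_le_self hl'.le) hkernel
  rw [hu.integral_dyadicKernel_mul hl hφ₁ hφ₂, exp_neg] at h
  calc l⁻¹ * u l⁻¹ = 4 * exp 2 * (1 / 2 * (exp 2)⁻¹ * (l⁻¹ - l⁻¹ / 2) * u l⁻¹) := by
        field_simp; ring
    _ ≤ 4 * exp 2 * (1 / φ l - 1 / φ (2 * l)) := by gcongr

lemma increment_le {M : ℝ} (ht : 0 < t) (hM : ∀ s ∈ Ioc 0 t, s * u s ≤ M) :
    1 / φ l - 1 / φ (2 * l) ≤ l * t * M + u t / (2 * l) := by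
  have hint := hu.integrableOn_dyadicKernel_mul hl hφ₁ hφ₂
  have hK := integrableOn_dyadicKernel hl
  have hsub : Ioi t ⊆ Ioi 0 := Ioi_subset_Ioi ht.le
  have hnonneg : ∀ s ∈ Ioi (0 : ℝ), 0 ≤ dyadicKernel l s := fun s hs ↦
    dyadicKernel_nonneg (mul_pos hl hs).le
  have hnear : ∫ s in Ioc 0 t, dyadicKernel l s * u s ≤ l * t * M := by
    calc ∫ s in Ioc 0 t, dyadicKernel l s * u s ≤ ∫ _ in Ioc 0 t, l * M := by
          refine setIntegral_mono_on (hint.mono_set Ioc_subset_Ioi_self)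
            (integrableOn_const (by simp)) measurableSet_Ioc fun s hs ↦ ?_
          calc dyadicKernel l s * u s ≤ l * s * u s :=
                mul_le_mul_of_nonneg_right (dyadicKernel_le (mul_pos hl hs.1).le)
                  (hu.nonneg s hs.1)
            _ = l * (s * u s) := mul_assoc _ _ _
            _ ≤ l * M := mul_le_mul_of_nonneg_left (hM s hs) hl.le
      _ = l * t * M := by
          rw [setIntegral_const, Real.volume_real_Ioc_of_le ht.le, smul_eq_mul]; ring
  have hfar : ∫ s in Ioi t, dyadicKernel l s * u s ≤ u t / (2 * l) := by
    calc ∫ s in Ioi t, dyadicKernel l s * u s ≤ ∫ s in Ioi t, dyadicKernel l s * u t :=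
          setIntegral_mono_on (hint.mono_set hsub) ((hK.mono_set hsub).mul_const _)
            measurableSet_Ioi fun s hs ↦ mul_le_mul_of_nonneg_left
              (hu.antitoneOn ht (hsub hs) (le_of_lt hs)) (hnonneg s (hsub hs))
      _ = (∫ s in Ioi t, dyadicKernel l s) * u t := integral_mul_const _ _
      _ ≤ (∫ s in Ioi 0, dyadicKernel l s) * u t :=
          mul_le_mul_of_nonneg_right (setIntegral_mono_set hK
            (ae_restrict_of_forall_mem measurableSet_Ioi hnonneg) hsub.eventuallyLE)
            (hu.nonneg t ht)
      _ = u t / (2 * l) := by rw [integral_dyadicKernel hl, one_div_mul_eq_div]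
  rw [← hu.integral_dyadicKernel_mul hl hφ₁ hφ₂, setIntegral_Ioi_eq_Ioc_add_Ioi ht.le hint]
  exact add_le_add hnear hfar

end Increment

end IsDecreasingPotentialDensity

section Log

lemma monotoneOn_inv_log_sq : MonotoneOn (fun t : ℝ ↦ (log t ^ 2)⁻¹) (Ioo 0 1) := by
  intro s hs t ht hst
  have hlog : log s ≤ log t := log_le_log hs.1 hst
  have ht' : log t < 0 := log_neg ht.1 ht.2
  exact inv_anti₀ (sq_pos_of_neg ht') (by nlinarith)

lemma isTheta_log_of_tendsto_sub {f : ℝ → ℝ} {a b : ℝ} (ha : a ≠ 0)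
    (h : Tendsto (fun l ↦ f l - a * log l) atTop (𝓝 b)) : f =Θ[atTop] log := by
  have hlog : (fun l ↦ a * log l) =Θ[atTop] log := (isTheta_const_mul_left ha).2 isTheta_rfl
  have hsub : (fun l ↦ f l - a * log l) =o[atTop] fun l ↦ a * log l :=
    ((h.isBigO_one ℝ).trans_isLittleO isLittleO_const_log_atTop).trans_isTheta hlog.symm
  exact IsEquivalent.isTheta hsub |>.trans hlog

lemma tendsto_log_one_add_rpow_sub {a : ℝ} (ha : 0 < a) :
    Tendsto (fun l : ℝ ↦ log (1 + l ^ a) - a * log l) atTop (𝓝 0) := by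
  have hlim : Tendsto (fun l : ℝ ↦ log (1 + l ^ (-a))) atTop (𝓝 0) := by
    simpa using ((tendsto_rpow_neg_atTop ha).const_add 1).log (by norm_num)
  refine hlim.congr' ?_
  filter_upwards [eventually_gt_atTop 0] with l hl
  have hla : 0 < l ^ a := rpow_pos_of_pos hl a
  rw [← log_rpow hl, ← log_div (by positivity) hla.ne', add_div, div_self hla.ne', rpow_neg hl.le,
    one_div, add_comm]

end Log

/-- The Laplace exponent `φ(λ) = log (1 + λ^{β/2})` of the geometric `β/2`-stable subordinator. -/
noncomputable def geometricStableExponent (β l : ℝ) : ℝ := log (1 + l ^ (β / 2))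

section GeometricStableExponent

variable {β l : ℝ}

lemma geometricStableExponent_pos (hl : 0 < l) : 0 < geometricStableExponent β l :=
  log_pos (lt_add_of_pos_right 1 (rpow_pos_of_pos hl _))

lemma geometricStableExponent_increment_isTheta (hβ : 0 < β) :
    (fun l ↦ 1 / geometricStableExponent β l - 1 / geometricStableExponent β (2 * l))
      =Θ[atTop] fun l ↦ (log l ^ 2)⁻¹ := by
  set φ := geometricStableExponent β
  have hβ' : 0 < β / 2 := half_pos hβ
  have hφ : Tendsto (fun l ↦ φ l - β / 2 * log l) atTop (𝓝 0) := tendsto_log_one_add_rpow_sub hβ'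
  have hφ₂ : Tendsto (fun l ↦ φ (2 * l) - β / 2 * log l) atTop (𝓝 (β / 2 * log 2)) := by
    have h := (hφ.comp (tendsto_id.const_mul_atTop two_pos)).add_const (β / 2 * log 2)
    rw [zero_add] at h
    refine h.congr' ?_
    filter_upwards [eventually_gt_atTop 0] with l hl
    simp only [Function.comp_apply, id_eq, log_mul two_ne_zero hl.ne']
    ring
  have hdiff : (fun l ↦ φ (2 * l) - φ l) =Θ[atTop] fun _ ↦ (1 : ℝ) := by
    have h : Tendsto (fun l ↦ φ (2 * l) - φ l) atTop (𝓝 (β / 2 * log 2)) := by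
      simpa using hφ₂.sub hφ
    exact (isTheta_of_div_tendsto_nhds_ne_zero (by simpa using h)
      (mul_ne_zero hβ'.ne' (log_pos one_lt_two).ne')).symm
  have hmul : (fun l ↦ φ l * φ (2 * l)) =Θ[atTop] fun l ↦ log l * log l :=
    (isTheta_log_of_tendsto_sub hβ'.ne' hφ).mul (isTheta_log_of_tendsto_sub hβ'.ne' hφ₂)
  have heq : (fun l ↦ 1 / φ l - 1 / φ (2 * l)) =ᶠ[atTop]
      fun l ↦ (φ (2 * l) - φ l) / (φ l * φ (2 * l)) := by
    filter_upwards [eventually_gt_atTop 0] with l hl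
    have h₁ : φ l ≠ 0 := (geometricStableExponent_pos hl).ne'
    have h₂ : φ (2 * l) ≠ 0 := (geometricStableExponent_pos (by positivity)).ne'
    field_simp
  simpa only [sq, one_div] using heq.trans_isTheta (hdiff.div hmul)

lemma inv_geometricStableExponent_le (hl : 0 < l) :
    (geometricStableExponent β l)⁻¹ ≤ 1 + l ^ (-(β / 2)) := by
  rw [rpow_neg hl.le, geometricStableExponent]
  have hx : 0 < l ^ (β / 2) := rpow_pos_of_pos hl _
  generalize l ^ (β / 2) = x at hx ⊢
  calc (log (1 + x))⁻¹ ≤ (1 - (1 + x)⁻¹)⁻¹ :=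
        inv_anti₀ (sub_pos.2 (inv_lt_one_of_one_lt₀ (by linarith)))
          (one_sub_inv_le_log_of_pos (by positivity))
    _ = 1 + x⁻¹ := by
        have hsub : 1 - (1 + x)⁻¹ = x / (1 + x) := by field_simp; ring
        rw [hsub]
        field_simp
        ring

end GeometricStableExponent

namespace IsDecreasingPotentialDensity

section Tauberian

variable {φ u : ℝ → ℝ} (hu : IsDecreasingPotentialDensity φ u) (hφ : ∀ l ∈ Ioi 0, φ l ≠ 0)

include hu hφ

lemma mul_isBigO_increment :
    (fun t ↦ t * u t) =O[𝓝[>] 0] fun t ↦ 1 / φ t⁻¹ - 1 / φ (2 * t⁻¹) := by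
  refine .of_bound (4 * exp 2) ?_
  filter_upwards [self_mem_nhdsWithin] with t ht
  have ht' : 0 < t⁻¹ := inv_pos.2 ht
  have h := hu.inv_mul_le_increment ht' (hφ _ ht') (hφ _ (mul_pos two_pos ht'))
  rw [inv_inv] at h
  rw [norm_of_nonneg (mul_nonneg (le_of_lt ht) (hu.nonneg t ht))]
  exact h.trans (mul_le_mul_of_nonneg_left (le_abs_self _) (by positivity))

/-- If the increment is at least `(log l)⁻² / c` and `s u(s) ≤ C (log s)⁻²`, then choosing
`l = ε / t` with `ε` small makes the mass of `(0, t]` negligible in the increment. -/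
lemma inv_log_sq_le_mul {c C ε t : ℝ} (hc : 0 < c) (hC : 0 < C) (hε : 0 < ε) (hε₁ : ε ≤ 1)
    (hcC : c * C * ε ≤ 1 / 2) (ht : 0 < t) (htε : t < ε)
    (hinc : (log (ε / t) ^ 2)⁻¹ ≤ c * (1 / φ (ε / t) - 1 / φ (2 * (ε / t))))
    (hupper : ∀ s ∈ Ioc 0 t, s * u s ≤ C * (log s ^ 2)⁻¹) :
    (log t ^ 2)⁻¹ ≤ c / ε * (t * u t) := by
  have hl : 0 < ε / t := div_pos hε ht
  have ht' : t / ε ∈ Ioo 0 1 := ⟨div_pos ht hε, (div_lt_one hε).2 htε⟩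
  have hle : t ≤ t / ε := le_div_self ht.le hε hε₁
  have hmono : ∀ s ∈ Ioc 0 t, (log s ^ 2)⁻¹ ≤ (log (ε / t) ^ 2)⁻¹ := fun s hs ↦ by
    have hs' : s ≤ t / ε := hs.2.trans hle
    rw [← inv_div t ε, log_inv, neg_sq]
    exact monotoneOn_inv_log_sq ⟨hs.1, hs'.trans_lt ht'.2⟩ ht' hs'
  have hincLe := hu.increment_le hl (hφ _ hl) (hφ _ (mul_pos two_pos hl)) ht fun s hs ↦
    (hupper s hs).trans (mul_le_mul_of_nonneg_left (hmono s hs) hC.le)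
  set L := (log (ε / t) ^ 2)⁻¹
  have hself : L ≤ c * C * ε * L + c / (2 * ε) * (t * u t) := by
    calc L ≤ c * (ε / t * t * (C * L) + u t / (2 * (ε / t))) :=
          hinc.trans (mul_le_mul_of_nonneg_left hincLe hc.le)
      _ = c * C * ε * L + c / (2 * ε) * (t * u t) := by field_simp
  have hhalf : c * C * ε * L ≤ 1 / 2 * L := mul_le_mul_of_nonneg_right hcC (by positivity)
  calc (log t ^ 2)⁻¹ ≤ L := hmono t ⟨ht, le_rfl⟩
    _ ≤ 2 * (c / (2 * ε) * (t * u t)) := by linarith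
    _ = c / ε * (t * u t) := by field_simp

theorem mul_isTheta_inv_log_sq
    (hinc : (fun l ↦ 1 / φ l - 1 / φ (2 * l)) =Θ[atTop] fun l ↦ (log l ^ 2)⁻¹) :
    (fun t ↦ t * u t) =Θ[𝓝[>] 0] fun t ↦ (log t ^ 2)⁻¹ := by
  have hupper : (fun t ↦ t * u t) =O[𝓝[>] 0] fun t ↦ (log t ^ 2)⁻¹ := by
    simpa only [Function.comp_def, log_inv, neg_sq] using
      (hu.mul_isBigO_increment hφ).trans (hinc.1.comp_tendsto tendsto_inv_nhdsGT_zero)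
  refine ⟨hupper, ?_⟩
  obtain ⟨C, hC, hupper⟩ := hupper.exists_pos
  obtain ⟨c, hc, hlower⟩ := hinc.2.exists_pos
  obtain ⟨δ, hδ, hupper⟩ := mem_nhdsGT_iff_exists_Ioo_subset.1 hupper.bound
  set ε := min 1 (1 / (2 * (c * C)))
  have hε : 0 < ε := by positivity
  have hcC : c * C * ε ≤ 1 / 2 :=
    (mul_le_mul_of_nonneg_left (min_le_right _ _) (by positivity)).trans_eq (by field_simp)
  have hlim : Tendsto (fun t ↦ ε / t) (𝓝[>] 0) atTop :=
    tendsto_inv_nhdsGT_zero.const_mul_atTop hε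
  refine .of_bound (c / ε) ?_
  filter_upwards [Ioo_mem_nhdsGT hε, Ioo_mem_nhdsGT hδ, hlim.eventually hlower.bound]
    with t ⟨ht, htε⟩ ⟨_, htδ⟩ hinc
  have hl : 0 < ε / t := div_pos hε ht
  have hincNonneg : 0 ≤ 1 / φ (ε / t) - 1 / φ (2 * (ε / t)) := by
    rw [← hu.integral_dyadicKernel_mul hl (hφ _ hl) (hφ _ (mul_pos two_pos hl))]
    exact setIntegral_nonneg measurableSet_Ioi fun s hs ↦
      mul_nonneg (dyadicKernel_nonneg (mul_pos hl hs).le) (hu.nonneg s hs)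
  rw [norm_of_nonneg (by positivity), norm_of_nonneg hincNonneg] at hinc
  rw [norm_of_nonneg (by positivity), norm_of_nonneg (mul_nonneg ht.le (hu.nonneg t ht))]
  refine hu.inv_log_sq_le_mul hφ hc hC hε (min_le_left _ _) hcC ht htε hinc fun s hs ↦ ?_
  have h : ‖s * u s‖ ≤ C * ‖(log s ^ 2)⁻¹‖ := hupper ⟨hs.1, hs.2.trans_lt htδ⟩
  rwa [norm_of_nonneg (mul_nonneg hs.1.le (hu.nonneg s hs.1)), norm_of_nonneg (by positivity)] at h

end Tauberian

end IsDecreasingPotentialDensity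

lemma integral_rpow_neg_mul_exp_neg_div {s c : ℝ} (hs : 1 < s) (hc : 0 < c) :
    ∫ t in Ioi 0, t ^ (-s) * exp (-(c / t)) = (1 / c) ^ (s - 1) * Gamma (s - 1) := by
  have hinv := integral_comp_rpow_Ioi (fun y ↦ y ^ (s - 1 - 1) * exp (-(c * y)))
    (neg_ne_zero.2 one_ne_zero)
  rw [← integral_rpow_mul_exp_neg_mul_Ioi (sub_pos.2 hs) hc, ← hinv]
  refine setIntegral_congr_fun measurableSet_Ioi fun t (ht : 0 < t) ↦ ?_
  have hpow : t ^ (-s) = t ^ (-1 - 1 : ℝ) * t ^ (-(s - 1 - 1)) := by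
    rw [← rpow_add ht]; ring_nf
  simp only [abs_neg, abs_one, one_mul, smul_eq_mul, rpow_neg_one, inv_rpow ht.le,
    ← rpow_neg ht.le, hpow, mul_assoc, div_eq_mul_inv]

/-- The Gaussian heat kernel `p_t(x)` of `ℝᵈ` at a point with `|x| = r`. The dimension may be any
real number. -/
noncomputable def heatKernel (d r t : ℝ) : ℝ := (4 * π * t) ^ (-d / 2) * exp (-(r ^ 2 / (4 * t)))

section HeatKernel

variable {d r t q : ℝ}

lemma heatKernel_nonneg (ht : 0 ≤ t) : 0 ≤ heatKernel d r t := by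
  unfold heatKernel; positivity

lemma measurable_heatKernel (d r : ℝ) : Measurable (heatKernel d r) := by
  unfold heatKernel; fun_prop

lemma heatKernel_mul_rpow (ht : 0 < t) : heatKernel d r t * t ^ q =
    (4 * π) ^ (-d / 2) * (t ^ (-(d / 2 - q)) * exp (-(r ^ 2 / 4 / t))) := by
  rw [heatKernel, mul_rpow (by positivity) ht.le, div_div, neg_sub, sub_eq_add_neg, rpow_add ht,
    neg_div]
  ring

lemma heatKernel_le (hd : 0 ≤ d) (ht : 0 < t) : heatKernel d r t ≤ t ^ (-d / 2) := by
  have hpi : 1 ≤ 4 * π := by linarith [pi_gt_three]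
  calc heatKernel d r t ≤ (4 * π * t) ^ (-d / 2) * 1 := by
        unfold heatKernel
        gcongr
        exact exp_le_one_iff.2 (neg_nonpos.2 (by positivity))
    _ ≤ t ^ (-d / 2) := by
        rw [mul_one]
        exact rpow_le_rpow_of_nonpos ht (le_mul_of_one_le_left ht.le hpi) (by linarith)

lemma le_heatKernel (hd : 0 ≤ d) (hr : 0 < r) (ht : t ∈ Ioc (r ^ 2 / 2) (r ^ 2)) :
    (4 * π) ^ (-d / 2) * r ^ (-d) * exp (-(1 / 2)) ≤ heatKernel d r t := by
  obtain ⟨ht₁, ht₂⟩ := ht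
  have ht : 0 < t := lt_trans (by positivity) ht₁
  have hpow : (4 * π) ^ (-d / 2) * r ^ (-d) = (4 * π * r ^ 2) ^ (-d / 2) := by
    rw [mul_rpow (x := 4 * π) (by positivity) (by positivity), ← rpow_natCast_mul hr.le]
    congr 2
    push_cast
    ring
  have hexp : r ^ 2 / (4 * t) ≤ 1 / 2 := by
    rw [div_le_iff₀ (by positivity)]
    linarith
  rw [hpow, heatKernel]
  gcongr ?_ * exp (-?_)
  exact rpow_le_rpow_of_nonpos (by positivity) (by gcongr) (by linarith)

lemma integral_heatKernel_mul_rpow (hr : 0 < r) (hq : q + 1 < d / 2) :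
    ∫ t in Ioi 0, heatKernel d r t * t ^ q =
      (4 * π) ^ (-d / 2) * ((1 / (r ^ 2 / 4)) ^ (d / 2 - q - 1) * Gamma (d / 2 - q - 1)) := by
  rw [← integral_rpow_neg_mul_exp_neg_div (by linarith) (by positivity), ← integral_const_mul]
  exact setIntegral_congr_fun measurableSet_Ioi fun t ht ↦ heatKernel_mul_rpow ht

lemma integrableOn_heatKernel_mul_rpow (hr : 0 < r) (hq : q + 1 < d / 2) :
    IntegrableOn (fun t ↦ heatKernel d r t * t ^ q) (Ioi 0) := by
  have hGamma : 0 < Gamma (d / 2 - q - 1) := Gamma_pos_of_pos (by linarith)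
  refine .of_integral_ne_zero ?_
  rw [integral_heatKernel_mul_rpow hr hq]
  positivity

lemma integrableOn_heatKernel_mul_inv (hd : 0 < d) (hr : 0 < r) :
    IntegrableOn (fun t ↦ heatKernel d r t * t⁻¹) (Ioi 0) := by
  simpa only [rpow_neg_one] using
    integrableOn_heatKernel_mul_rpow (q := -1) hr (by linarith : -1 + 1 < d / 2)

lemma integral_heatKernel_mul_inv (hd : 0 < d) (hr : 0 < r) :
    ∫ t in Ioi 0, heatKernel d r t * t⁻¹ = π ^ (-d / 2) * Gamma (d / 2) * r ^ (-d) := by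
  have h := integral_heatKernel_mul_rpow (q := -1) hr (by linarith : -1 + 1 < d / 2)
  have hexp : d / 2 - -1 - 1 = d / 2 := by ring
  simp only [rpow_neg_one, hexp] at h
  have hpow : (1 / (r ^ 2 / 4)) ^ (d / 2) = 4 ^ (d / 2) * r ^ (-d) := by
    rw [one_div_div, div_rpow (by positivity) (by positivity), ← rpow_natCast_mul hr.le,
      rpow_neg hr.le, div_eq_mul_inv]
    congr 3
    push_cast
    ring
  rw [h, hpow, mul_rpow (by positivity) pi_pos.le, neg_div, rpow_neg (by positivity : (0 : ℝ) ≤ 4)]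
  field_simp

end HeatKernel

/-- The radial profile of the Green function of Brownian motion on `ℝᵈ` subordinated by a
subordinator with potential density `u`. -/
noncomputable def greenProfile (d : ℝ) (u : ℝ → ℝ) (r : ℝ) : ℝ :=
  ∫ t in Ioi 0, heatKernel d r t * u t

section GreenProfile

variable {d r : ℝ} {u : ℝ → ℝ}

lemma le_greenProfile (hd : 0 ≤ d) (hr : 0 < r) (hu₀ : ∀ t ∈ Ioi 0, 0 ≤ u t)
    (hu : AntitoneOn u (Ioi 0)) (hint : IntegrableOn (fun t ↦ heatKernel d r t * u t) (Ioi 0)) :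
    (4 * π) ^ (-d / 2) * exp (-(1 / 2)) / 2 * (r ^ (-d) * (r ^ 2 * u (r ^ 2)))
      ≤ greenProfile d u r :=
  calc _ = (4 * π) ^ (-d / 2) * r ^ (-d) * exp (-(1 / 2)) * (r ^ 2 - r ^ 2 / 2) * u (r ^ 2) := by
        ring
    _ ≤ greenProfile d u r :=
        mul_sub_mul_le_setIntegral_of_antitoneOn hu₀ hu (fun _ ht ↦ heatKernel_nonneg (le_of_lt ht))
          hint (by positivity) (half_le_self (by positivity)) fun _ ↦ le_heatKernel hd hr

lemma setIntegral_Ioc_heatKernel_mul_le {a M : ℝ} (hd : 0 < d) (hr : 0 < r) (hM : 0 ≤ M)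
    (hu : ∀ t ∈ Ioc 0 a, t * u t ≤ M)
    (hint : IntegrableOn (fun t ↦ heatKernel d r t * u t) (Ioi 0)) :
    ∫ t in Ioc 0 a, heatKernel d r t * u t ≤ π ^ (-d / 2) * Gamma (d / 2) * (r ^ (-d) * M) := by
  have hinv := integrableOn_heatKernel_mul_inv hd hr
  have hsub : Ioc 0 a ⊆ Ioi 0 := Ioc_subset_Ioi_self
  calc ∫ t in Ioc 0 a, heatKernel d r t * u t
      ≤ ∫ t in Ioc 0 a, heatKernel d r t * t⁻¹ * M := by
        refine setIntegral_mono_on (hint.mono_set hsub) ((hinv.mono_set hsub).mul_const M)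
          measurableSet_Ioc fun t ht ↦ ?_
        have hut : u t ≤ t⁻¹ * M := (le_inv_mul_iff₀ ht.1).2 (hu t ht)
        rw [mul_assoc]
        exact mul_le_mul_of_nonneg_left hut (heatKernel_nonneg ht.1.le)
    _ = (∫ t in Ioc 0 a, heatKernel d r t * t⁻¹) * M := integral_mul_const _ _
    _ ≤ (∫ t in Ioi 0, heatKernel d r t * t⁻¹) * M := by
        refine mul_le_mul_of_nonneg_right (setIntegral_mono_set hinv ?_ hsub.eventuallyLE) hM
        exact ae_restrict_of_forall_mem measurableSet_Ioi fun t (ht : 0 < t) ↦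
          mul_nonneg (heatKernel_nonneg ht.le) (inv_nonneg.2 ht.le)
    _ = π ^ (-d / 2) * Gamma (d / 2) * (r ^ (-d) * M) := by
        rw [integral_heatKernel_mul_inv hd hr]; ring

section PowerBound

variable {b C : ℝ} (hd : 0 < d) (hb : b < d / 2)
  (hu : ∀ t ∈ Ioi 0, u t ≤ C * (t⁻¹ + t ^ (b - 1)))

include hd hb hu

lemma integrableOn_heatKernel_mul (hr : 0 < r) (hu₀ : ∀ t ∈ Ioi 0, 0 ≤ u t)
    (hanti : AntitoneOn u (Ioi 0)) :
    IntegrableOn (fun t ↦ heatKernel d r t * u t) (Ioi 0) := by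
  have hbound := ((integrableOn_heatKernel_mul_inv hd hr).add
    (integrableOn_heatKernel_mul_rpow hr (by linarith : b - 1 + 1 < d / 2))).const_mul C
  refine hbound.mono' ((measurable_heatKernel d r).aemeasurable.mul
    (aemeasurable_restrict_of_antitoneOn measurableSet_Ioi hanti)).aestronglyMeasurable
    (ae_restrict_of_forall_mem measurableSet_Ioi fun t ht ↦ ?_)
  have hK : 0 ≤ heatKernel d r t := heatKernel_nonneg (le_of_lt ht)
  calc ‖heatKernel d r t * u t‖ = heatKernel d r t * u t :=
        norm_of_nonneg (mul_nonneg hK (hu₀ t ht))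
    _ ≤ heatKernel d r t * (C * (t⁻¹ + t ^ (b - 1))) := mul_le_mul_of_nonneg_left (hu t ht) hK
    _ = C * (heatKernel d r t * t⁻¹ + heatKernel d r t * t ^ (b - 1)) := by ring

lemma setIntegral_Ioi_heatKernel_mul_le {a : ℝ} (hb₀ : 0 ≤ b) (hC : 0 ≤ C) (ha : 0 < a)
    (ha₁ : a ≤ 1) (hint : IntegrableOn (fun t ↦ heatKernel d r t * u t) (Ioi 0)) :
    ∫ t in Ioi a, heatKernel d r t * u t ≤ C * (1 / (d / 2) + 1 / (d / 2 - b)) * a ^ (-d / 2) := by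
  have hint₁ : IntegrableOn (fun t : ℝ ↦ t ^ (-d / 2 - 1)) (Ioi a) :=
    integrableOn_Ioi_rpow_of_lt (by linarith) ha
  have hint₂ : IntegrableOn (fun t : ℝ ↦ t ^ (b - d / 2 - 1)) (Ioi a) :=
    integrableOn_Ioi_rpow_of_lt (by linarith) ha
  have hpow : a ^ (b - d / 2) ≤ a ^ (-d / 2) := rpow_le_rpow_of_exponent_ge ha ha₁ (by linarith)
  have hsub : Ioi a ⊆ Ioi 0 := Ioi_subset_Ioi ha.le
  have : 0 < d / 2 - b := sub_pos.2 hb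
  calc ∫ t in Ioi a, heatKernel d r t * u t
      ≤ ∫ t in Ioi a, C * (t ^ (-d / 2 - 1) + t ^ (b - d / 2 - 1)) := by
        refine setIntegral_mono_on (hint.mono_set hsub) ((hint₁.add hint₂).const_mul C)
          measurableSet_Ioi fun t hta ↦ ?_
        have ht : 0 < t := hsub hta
        calc heatKernel d r t * u t ≤ heatKernel d r t * (C * (t⁻¹ + t ^ (b - 1))) :=
              mul_le_mul_of_nonneg_left (hu t ht) (heatKernel_nonneg ht.le)
          _ ≤ t ^ (-d / 2) * (C * (t⁻¹ + t ^ (b - 1))) :=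
              mul_le_mul_of_nonneg_right (heatKernel_le hd.le ht) (by positivity)
          _ = C * (t ^ (-d / 2) * t⁻¹ + t ^ (-d / 2) * t ^ (b - 1)) := by ring
          _ = C * (t ^ (-d / 2 - 1) + t ^ (b - d / 2 - 1)) := by
              rw [← rpow_neg_one t, ← rpow_add ht, ← rpow_add ht]; ring_nf
    _ = C * (1 / (d / 2) * a ^ (-d / 2) + 1 / (d / 2 - b) * a ^ (b - d / 2)) := by
        rw [integral_const_mul, integral_add hint₁ hint₂, integral_Ioi_rpow_of_lt (by linarith) ha,
          integral_Ioi_rpow_of_lt (by linarith) ha, sub_add_cancel, sub_add_cancel,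
          ← neg_sub (d / 2) b]
        field_simp
    _ ≤ C * (1 / (d / 2) * a ^ (-d / 2) + 1 / (d / 2 - b) * a ^ (-d / 2)) := by gcongr
    _ = C * (1 / (d / 2) + 1 / (d / 2 - b)) * a ^ (-d / 2) := by ring

end PowerBound

end GreenProfile

section Asymptotics

variable {d : ℝ} {u : ℝ → ℝ}

lemma isLittleO_rpow_half_rpow_mul_inv_log_sq (hd : 0 < d) :
    (fun r : ℝ ↦ r ^ (-d / 2)) =o[𝓝[>] 0] fun r ↦ r ^ (-d) * (log r ^ 2)⁻¹ := by
  have hlog : (fun r ↦ |log r| ^ (2 : ℝ)) =o[𝓝[>] 0] fun r ↦ r ^ (-d / 2) :=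
    isLittleO_abs_log_rpow_rpow_nhdsGT_zero 2 (by linarith)
  have hmul := (isBigO_refl (fun r : ℝ ↦ r ^ (-d / 2) * (log r ^ 2)⁻¹) (𝓝[>] 0)).mul_isLittleO hlog
  refine hmul.congr' ?_ ?_
  · filter_upwards [Ioo_mem_nhdsGT one_pos] with r ⟨hr₀, hr₁⟩
    have hlog₀ : log r ≠ 0 := (log_neg hr₀ hr₁).ne
    rw [rpow_two, sq_abs, inv_mul_cancel_right₀ (by positivity)]
  · filter_upwards [self_mem_nhdsWithin] with r hr
    have hpow : r ^ (-d) = r ^ (-d / 2) * r ^ (-d / 2) := by rw [← rpow_add hr, add_halves]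
    rw [hpow]
    ring

lemma rpow_mul_inv_log_sq_isBigO_greenProfile (hd : 0 ≤ d) (hu₀ : ∀ t ∈ Ioi 0, 0 ≤ u t)
    (hanti : AntitoneOn u (Ioi 0))
    (hint : ∀ r ∈ Ioi 0, IntegrableOn (fun t ↦ heatKernel d r t * u t) (Ioi 0))
    (hu : (fun t ↦ (log t ^ 2)⁻¹) =O[𝓝[>] 0] fun t ↦ t * u t) :
    (fun r ↦ r ^ (-d) * (log r ^ 2)⁻¹) =O[𝓝[>] 0] greenProfile d u := by
  have hsq : Tendsto (fun r : ℝ ↦ r ^ 2) (𝓝[>] 0) (𝓝[>] 0) :=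
    tendsto_nhdsWithin_of_tendsto_nhds_of_eventually_within _
      (((continuous_pow 2).tendsto' 0 0 (zero_pow two_ne_zero)).mono_left nhdsWithin_le_nhds)
      (eventually_mem_nhdsWithin.mono fun r (hr : 0 < r) ↦ pow_pos hr 2)
  have hlog : (fun r ↦ (log r ^ 2)⁻¹) =O[𝓝[>] 0] fun r ↦ r ^ 2 * u (r ^ 2) := by
    refine ((hu.comp_tendsto hsq).const_mul_left 4).congr_left fun r ↦ ?_
    simp only [Function.comp_apply, log_pow, Nat.cast_ofNat]
    ring
  refine ((isBigO_refl (fun r : ℝ ↦ r ^ (-d)) _).mul hlog).trans ?_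
  refine .of_bound ((4 * π) ^ (-d / 2) * exp (-(1 / 2)) / 2)⁻¹ ?_
  filter_upwards [self_mem_nhdsWithin] with r hr
  have hr₀ : 0 < r := hr
  have hur : 0 ≤ u (r ^ 2) := hu₀ _ (pow_pos hr₀ 2)
  rw [norm_of_nonneg (by positivity), le_inv_mul_iff₀ (by positivity)]
  exact (le_greenProfile hd hr₀ hu₀ hanti (hint r hr)).trans (le_norm_self _)

lemma setIntegral_Ioc_heatKernel_mul_isBigO (hd : 0 < d) (hu₀ : ∀ t ∈ Ioi 0, 0 ≤ u t)
    (hint : ∀ r ∈ Ioi 0, IntegrableOn (fun t ↦ heatKernel d r t * u t) (Ioi 0))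
    (hu : (fun t ↦ t * u t) =O[𝓝[>] 0] fun t ↦ (log t ^ 2)⁻¹) :
    (fun r ↦ ∫ t in Ioc 0 r, heatKernel d r t * u t)
      =O[𝓝[>] 0] fun r ↦ r ^ (-d) * (log r ^ 2)⁻¹ := by
  obtain ⟨A, hA, hu⟩ := hu.exists_pos
  obtain ⟨δ, hδ, hu⟩ := mem_nhdsGT_iff_exists_Ioo_subset.1 hu.bound
  refine .of_bound (π ^ (-d / 2) * Gamma (d / 2) * A) ?_
  filter_upwards [Ioo_mem_nhdsGT one_pos, Ioo_mem_nhdsGT hδ] with r hr ⟨hr₀, hrδ⟩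
  have hut : ∀ t ∈ Ioc 0 r, t * u t ≤ A * (log r ^ 2)⁻¹ := fun t ht ↦
    calc t * u t ≤ A * ‖(log t ^ 2)⁻¹‖ :=
          (le_norm_self _).trans (hu ⟨ht.1, ht.2.trans_lt hrδ⟩)
      _ = A * (log t ^ 2)⁻¹ := by rw [norm_of_nonneg (by positivity)]
      _ ≤ A * (log r ^ 2)⁻¹ := by
          gcongr A * ?_
          exact monotoneOn_inv_log_sq ⟨ht.1, ht.2.trans_lt hr.2⟩ hr ht.2
  rw [norm_of_nonneg (setIntegral_nonneg measurableSet_Ioc fun t ht ↦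
    mul_nonneg (heatKernel_nonneg ht.1.le) (hu₀ t ht.1)), norm_of_nonneg (by positivity)]
  exact (setIntegral_Ioc_heatKernel_mul_le hd hr₀ (by positivity) hut (hint r hr₀)).trans_eq
    (by ring)

lemma setIntegral_Ioi_heatKernel_mul_isBigO {b C : ℝ} (hd : 0 < d) (hb₀ : 0 ≤ b) (hb : b < d / 2)
    (hC : 0 ≤ C) (hu₀ : ∀ t ∈ Ioi 0, 0 ≤ u t)
    (hint : ∀ r ∈ Ioi 0, IntegrableOn (fun t ↦ heatKernel d r t * u t) (Ioi 0))
    (hu : ∀ t ∈ Ioi 0, u t ≤ C * (t⁻¹ + t ^ (b - 1))) :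
    (fun r ↦ ∫ t in Ioi r, heatKernel d r t * u t) =O[𝓝[>] 0] fun r ↦ r ^ (-d / 2) := by
  refine .of_bound (C * (1 / (d / 2) + 1 / (d / 2 - b))) ?_
  filter_upwards [Ioo_mem_nhdsGT one_pos] with r ⟨hr₀, hr₁⟩
  have hnonneg : ∀ t ∈ Ioi r, 0 ≤ heatKernel d r t * u t := fun t ht ↦
    have ht₀ : 0 < t := hr₀.trans ht
    mul_nonneg (heatKernel_nonneg ht₀.le) (hu₀ t ht₀)
  rw [norm_of_nonneg (setIntegral_nonneg measurableSet_Ioi hnonneg), norm_of_nonneg (by positivity)]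
  exact setIntegral_Ioi_heatKernel_mul_le hd hb hu hb₀ hC hr₀ hr₁.le (hint r hr₀)

end Asymptotics

lemma IsDecreasingPotentialDensity.le_of_geometricStable {β t : ℝ} {u : ℝ → ℝ}
    (hu : IsDecreasingPotentialDensity (geometricStableExponent β) u) (ht : 0 < t) :
    u t ≤ exp 1 * (t⁻¹ + t ^ (β / 2 - 1)) := by
  have ht' : 0 < t⁻¹ := inv_pos.2 ht
  calc u t ≤ exp 1 * (t⁻¹ / geometricStableExponent β t⁻¹) :=
        hu.le_exp_one_div ht (geometricStableExponent_pos ht').ne'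
    _ ≤ exp 1 * (t⁻¹ * (1 + t⁻¹ ^ (-(β / 2)))) := by
        rw [div_eq_mul_inv]
        gcongr
        exact inv_geometricStableExponent_le ht'
    _ = exp 1 * (t⁻¹ + t ^ (β / 2 - 1)) := by
        rw [inv_rpow ht.le, rpow_neg ht.le, inv_inv, rpow_sub_one ht.ne']
        ring

theorem greenProfile_isTheta_of_geometricStable {β d : ℝ} {u : ℝ → ℝ} (hβ : 0 < β) (hβd : β < d)
    (hu : IsDecreasingPotentialDensity (geometricStableExponent β) u) :
    greenProfile d u =Θ[𝓝[>] 0] fun r ↦ r ^ (-d) * (log r ^ 2)⁻¹ := by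
  have hd : 0 < d := hβ.trans hβd
  have hb : β / 2 < d / 2 := by linarith
  have hlocal := hu.mul_isTheta_inv_log_sq (fun _ hl ↦ (geometricStableExponent_pos hl).ne')
    (geometricStableExponent_increment_isTheta hβ)
  have hglobal : ∀ t ∈ Ioi 0, u t ≤ exp 1 * (t⁻¹ + t ^ (β / 2 - 1)) := fun _ ht ↦
    hu.le_of_geometricStable ht
  have hint : ∀ r ∈ Ioi 0, IntegrableOn (fun t ↦ heatKernel d r t * u t) (Ioi 0) := fun _ hr ↦
    integrableOn_heatKernel_mul hd hb hglobal hr hu.nonneg hu.antitoneOn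
  have hnear := setIntegral_Ioc_heatKernel_mul_isBigO hd hu.nonneg hint hlocal.1
  have hfar := setIntegral_Ioi_heatKernel_mul_isBigO hd (half_pos hβ).le hb (exp_nonneg 1)
    hu.nonneg hint hglobal
  have hfar' := (hfar.trans_isLittleO (isLittleO_rpow_half_rpow_mul_inv_log_sq hd)).isBigO
  refine ⟨(hnear.add hfar').congr' ?_ .rfl,
    rpow_mul_inv_log_sq_isBigO_greenProfile hd.le hu.nonneg hu.antitoneOn hint hlocal.2⟩
  filter_upwards [self_mem_nhdsWithin] with r hr
  exact (setIntegral_Ioi_eq_Ioc_add_Ioi (le_of_lt hr) (hint r hr)).symm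

lemma exists_bounds_of_isTheta_nhdsGT_zero {f h : ℝ → ℝ} (hfh : f =Θ[𝓝[>] 0] h)
    (hf : ∀ᶠ r in 𝓝[>] 0, 0 ≤ f r) (hh : ∀ᶠ r in 𝓝[>] 0, 0 < h r) :
    ∃ c C r₀ : ℝ, 0 < c ∧ c ≤ C ∧ 0 < r₀ ∧ ∀ r, 0 < r → r < r₀ →
      c * h r ≤ f r ∧ f r ≤ C * h r := by
  obtain ⟨C, hC⟩ := hfh.1.bound
  obtain ⟨c, hc, hcf⟩ := hfh.2.exists_pos
  have hbound : ∀ᶠ r in 𝓝[>] 0, 0 < h r ∧ c⁻¹ * h r ≤ f r ∧ f r ≤ C * h r := by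
    filter_upwards [hC, hcf.bound, hf, hh] with r hfC hhc hf₀ hh₀
    rw [norm_of_nonneg hf₀, norm_of_nonneg hh₀.le] at hfC hhc
    exact ⟨hh₀, (inv_mul_le_iff₀ hc).2 hhc, hfC⟩
  obtain ⟨r₀, hr₀, hsub⟩ := mem_nhdsGT_iff_exists_Ioo_subset.1 hbound
  refine ⟨c⁻¹, C, r₀, inv_pos.2 hc, ?_, hr₀, fun r hr hrr₀ ↦ (hsub ⟨hr, hrr₀⟩).2⟩
  obtain ⟨r, hh₀, hlower, hupper⟩ := hbound.exists
  exact le_of_mul_le_mul_right (hlower.trans hupper) hh₀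

theorem geometric_stable_green_asymp_general {β d : ℝ} {u g : ℝ → ℝ} (hβ : 0 < β) (hβd : β < d)
    (hu : IsDecreasingPotentialDensity (geometricStableExponent β) u)
    (hg : ∀ r, 0 < r → g r = greenProfile d u r) :
    ∃ c C r₀ : ℝ, 0 < c ∧ c ≤ C ∧ 0 < r₀ ∧ ∀ r, 0 < r → r < r₀ →
      c * (r ^ (-d) / log (1 / r) ^ 2) ≤ g r ∧ g r ≤ C * (r ^ (-d) / log (1 / r) ^ 2) := by
  have hgreen : g =ᶠ[𝓝[>] 0] greenProfile d u := eventually_mem_nhdsWithin.mono hg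
  have hscale (r : ℝ) : r ^ (-d) / log (1 / r) ^ 2 = r ^ (-d) * (log r ^ 2)⁻¹ := by
    rw [one_div, log_inv, neg_sq, div_eq_mul_inv]
  simp only [hscale]
  refine exists_bounds_of_isTheta_nhdsGT_zero
    (hgreen.trans_isTheta (greenProfile_isTheta_of_geometricStable hβ hβd hu)) ?_ ?_
  · filter_upwards [hgreen] with r hr
    rw [hr]
    exact setIntegral_nonneg measurableSet_Ioi fun t ht ↦
      mul_nonneg (heatKernel_nonneg (le_of_lt ht)) (hu.nonneg t ht)
  · filter_upwards [Ioo_mem_nhdsGT one_pos] with r ⟨hr₀, hr₁⟩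
    have hlog : log r ≠ 0 := (log_neg hr₀ hr₁).ne
    positivity

/-- The Green function profile of the geometric `β`-stable process satisfies
`g(r) ≍ r^{-d} (log(1/r))^{-2}` as `r → 0+`. -/
theorem geometric_stable_green_asymp
    (β : ℝ) (hβ0 : 0 < β) (hβ2 : β ≤ 2)
    (u : ℝ → ℝ)
    (hupos : ∀ t, 0 < t → 0 < u t)
    (hudec : ∀ s t, 0 < s → s ≤ t → u t ≤ u s)
    (hu : ∀ l, 0 < l → ∫ t in Ioi (0:ℝ), Real.exp (-(l * t)) * u t =
      1 / Real.log (1 + l ^ (β / 2)))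
    (d : ℕ) (hd : 3 ≤ d)
    (g : ℝ → ℝ)
    (hg : ∀ r, 0 < r → g r =
      ∫ t in Ioi (0:ℝ), (4 * Real.pi * t) ^ (-(d:ℝ) / 2) * Real.exp (-(r ^ 2 / (4 * t))) * u t) :
    ∃ c C r₀ : ℝ, 0 < c ∧ c ≤ C ∧ 0 < r₀ ∧ ∀ r, 0 < r → r < r₀ →
      c * (r ^ (-(d:ℝ)) / Real.log (1 / r) ^ 2) ≤ g r ∧
      g r ≤ C * (r ^ (-(d:ℝ)) / Real.log (1 / r) ^ 2) := by
  exact geometric_stable_green_asymp_general hβ0 (hβ2.trans_lt (by exact_mod_cast hd))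
    ⟨fun t ht ↦ (hupos t ht).le, fun s hs t _ ↦ hudec s t hs, hu⟩ hg
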